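/- Let G be an A-lamination over ℝ, and define a_{kl} = (1/2)·I_{kl}(G) for every segment {kl} (with a_{lk} = a_{kl} and a_{kk} = 0). Then a_{ij} = 0 for every edge {ij}, and the tropical Plücker relations hold: a_{ik} + a_{jl} = max( a_{ij} + a_{kl}, a_{il} + a_{jk} ) for every quadruple of distinct vertices i, j, k, l in clockwise order. In other words, a is an ℝ-tropical point of the cluster A-variety of type A_n in its coordinate model L(ℝ). -/

import Mathlib

/-!
For clockwise `p, q, r, s` the vertex set is the disjoint union of the four cyclic intervals
`A = (p, q]`, `B = (q, r]`, `C = (r, s]`, `D = (s, p]`. Writing `XY` for the total weight between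
`X` and `Y` and `σ = AB + BC + CD + DA`, the definition of `I` gives

* `I_pr + I_qs = σ + 2 AC + 2 BD`,
* `I_pq + I_rs = σ + 2 AC`,
* `I_qr + I_ps = σ + 2 BD`.

A segment from `A` to `C`, or from `B` to `D`, is a diagonal, so `AC` and `BD` are nonnegative;
every segment from `A` to `C` crosses every segment from `B` to `D`, so one of the two vanishes
(`blockWeight_eq_zero_or`). This is the tropical Plücker relation. Vanishing on edges is the
balancing condition, since `I_{k,k+1}` is the row sum at `k + 1`; symmetry holds because `(l, k]`
is the complement of `(k, l]`.

All statements about cyclic order are reduced to linear arithmetic in the numbers `(v - p).val`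
for a fixed base vertex `p`, by means of `val_sub_base`.
-/

open Finset

/-- Vertices `i, j` of the `(n+3)`-gon (labelled by `ZMod (n+3)`) are adjacent,
i.e. the segment `{i j}` is an edge. -/
def IsEdge (n : ℕ) (i j : ZMod (n + 3)) : Prop := i = j + 1 ∨ j = i + 1

/-- The segment `{i j}` is a diagonal of the `(n+3)`-gon. -/
def IsDiag (n : ℕ) (i j : ZMod (n + 3)) : Prop := i ≠ j ∧ ¬ IsEdge n i j

/-- The distinct vertices `p, q, r, s` are in clockwise order. -/
def Clockwise (n : ℕ) (p q r s : ZMod (n + 3)) : Prop :=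
  0 < (q - p).val ∧ (q - p).val < (r - p).val ∧ (r - p).val < (s - p).val

/-- The segments `{i j}` and `{k l}` cross: their endpoints interlace in cyclic order. -/
def Cross (n : ℕ) (i j k l : ZMod (n + 3)) : Prop :=
  Clockwise n i k j l ∨ Clockwise n i l j k

/-- `L(ℝ)`: the set of `ℝ`-tropical points of the cluster `A`-variety of type `Aₙ`
in its coordinate model: symmetric real functions on pairs of vertices, vanishing on
the diagonal and on edges, satisfying the tropical Plücker relations. -/
structure TropPt (n : ℕ) where
  x : ZMod (n + 3) → ZMod (n + 3) → ℝ
  symm : ∀ i j, x i j = x j i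
  diag_zero : ∀ i, x i i = 0
  edge_zero : ∀ i j, IsEdge n i j → x i j = 0
  pluecker : ∀ p q r s, Clockwise n p q r s →
    x p r + x q s = max (x p q + x r s) (x q r + x p s)

/-- A partial triangulation: a set of pairwise non-crossing diagonals. -/
structure PartialTri (n : ℕ) where
  diags : Finset (Sym2 (ZMod (n + 3)))
  mem_isDiag : ∀ i j, s(i, j) ∈ diags → IsDiag n i j
  noncross : ∀ i j k l, s(i, j) ∈ diags → s(k, l) ∈ diags → ¬ Cross n i j k l

/-- The diagonal `{i j}` belongs to the supplement `S(T)`: it is not in `T` and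
`T ∪ {i j}` is again a partial triangulation. -/
def InSupp (n : ℕ) (T : PartialTri n) (i j : ZMod (n + 3)) : Prop :=
  IsDiag n i j ∧ s(i, j) ∉ T.diags ∧
    ∀ k l, s(k, l) ∈ T.diags → ¬ Cross n i j k l ∧ ¬ Cross n k l i j

/-- The face `F_c^T` of a partial triangulation `T`. -/
def Face (n : ℕ) (T : PartialTri n) (c : ZMod (n + 3) → ZMod (n + 3) → ℝ) :
    Set (TropPt n) :=
  {x | (∀ i j, s(i, j) ∈ T.diags → x.x i j = c i j) ∧
       (∀ i j, InSupp n T i j → x.x i j ≤ c i j)}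

/-- The polytope `F_c^∅ = {x ∈ L(ℝ) : x_{ij} ≤ c_{ij} for all diagonals}`. -/
def TropPoly (n : ℕ) (c : ZMod (n + 3) → ZMod (n + 3) → ℝ) : Set (TropPt n) :=
  {x | ∀ i j, IsDiag n i j → x.x i j ≤ c i j}

/-- `F_c^∅` is a Stasheff polytope: faces reverse inclusions of partial triangulations. -/
def IsStasheff (n : ℕ) (c : ZMod (n + 3) → ZMod (n + 3) → ℝ) : Prop :=
  ∀ T₁ T₂ : PartialTri n, T₁.diags ⊆ T₂.diags → Face n T₂ c ⊆ Face n T₁ c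

/-- A tropicalized cluster monomial: `F(x) = Σ_{{ij}∈T} n_{ij} x_{ij}` for some complete
triangulation `T` and nonnegative integers `n_{ij}` (each unordered pair is counted once,
whence the factor `1/2` in the symmetric double sum). -/
def IsClusterMono (n : ℕ) (F : TropPt n → ℝ) : Prop :=
  ∃ (T : PartialTri n) (m : ZMod (n + 3) → ZMod (n + 3) → ℕ),
    T.diags.card = n ∧ (∀ i j, m i j = m j i) ∧
    (∀ i j, s(i, j) ∉ T.diags → m i j = 0) ∧
    ∀ x : TropPt n, F x =
      (1 / 2) * ∑ i : ZMod (n + 3), ∑ j : ZMod (n + 3), (m i j : ℝ) * x.x i j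

/-- The cyclic interval `{k+1, …, l}` of vertices (empty when `k = l`). -/
def cycInt (n : ℕ) (k l : ZMod (n + 3)) : Finset (ZMod (n + 3)) :=
  Finset.univ.filter fun v => 1 ≤ (v - k).val ∧ (v - k).val ≤ (l - k).val

/-- `I_{kl}(w) = Σ_{a∈I, b∉I} w_{ab}` where `I = {k+1,…,l}` is the cyclic interval;
in particular `I_{kk}(w) = 0`. -/
def Icyc (n : ℕ) {M : Type*} [AddCommMonoid M]
    (w : ZMod (n + 3) → ZMod (n + 3) → M) (k l : ZMod (n + 3)) : M :=
  ∑ a ∈ cycInt n k l, ∑ b ∈ (cycInt n k l)ᶜ, w a b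

/-- An `A`-lamination on the `(n+3)`-gon over `ℝ`: a symmetric real matrix with zero
diagonal, nonnegative on diagonals, no two crossing diagonals both of nonzero weight,
and all row sums `R_p` equal to zero. -/
structure Lam (n : ℕ) where
  w : ZMod (n + 3) → ZMod (n + 3) → ℝ
  symm : ∀ i j, w i j = w j i
  diag_zero : ∀ i, w i i = 0
  nonneg : ∀ i j, IsDiag n i j → 0 ≤ w i j
  noncross : ∀ i j k l, IsDiag n i j → IsDiag n k l → Cross n i j k l →
    w i j = 0 ∨ w k l = 0
  balanced : ∀ p, ∑ j, w p j = 0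

/-- The clockwise distance from `y` to `x`, in terms of the distances from a base vertex `p`. -/
lemma val_sub_base {n : ℕ} (p x y : ZMod (n + 3)) :
    (x - y).val = if (y - p).val ≤ (x - p).val then (x - p).val - (y - p).val
      else (x - p).val + (n + 3) - (y - p).val := by
  have h : x - y = (x - p) - (y - p) := by ring
  rw [h]
  generalize x - p = a
  generalize y - p = b
  have ha := ZMod.val_lt a
  have hb := ZMod.val_lt b
  split_ifs with hab
  · exact ZMod.val_sub hab
  · have h2 := ZMod.val_sub (a := b) (b := a) (by omega)
    have h3 : a - b = -(b - a) := by ring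
    have : NeZero (b - a) := ⟨fun h0 => by rw [h0, ZMod.val_zero] at h2; omega⟩
    rw [h3, ZMod.val_neg_of_ne_zero, h2]
    omega

lemma isEdge_iff {n : ℕ} (i j : ZMod (n + 3)) :
    IsEdge n i j ↔ (i - j).val = 1 ∨ (j - i).val = 1 := by
  have h1 : (1 : ZMod (n + 3)).val = 1 := ZMod.val_one_eq_one_mod _ |>.trans (by
    rw [Nat.mod_eq_of_lt]; omega)
  have key : ∀ a b : ZMod (n + 3), a = b + 1 ↔ (a - b).val = 1 := fun a b => by
    rw [← sub_eq_iff_eq_add', ← (ZMod.val_injective (n + 3)).eq_iff, h1]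
  rw [IsEdge, key, key]

lemma isDiag_iff {n : ℕ} (i j : ZMod (n + 3)) :
    IsDiag n i j ↔ 2 ≤ (i - j).val ∧ 2 ≤ (j - i).val := by
  have h0 : i = j ↔ (i - j).val = 0 := by rw [ZMod.val_eq_zero, sub_eq_zero]
  have h1 := val_sub_base j j i
  have := ZMod.val_lt (i - j)
  rw [sub_self, ZMod.val_zero] at h1
  rw [IsDiag, isEdge_iff, Ne, h0]
  split_ifs at h1 <;> omega

lemma mem_cycInt {n : ℕ} {k l v : ZMod (n + 3)} :
    v ∈ cycInt n k l ↔ 1 ≤ (v - k).val ∧ (v - k).val ≤ (l - k).val := by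
  simp [cycInt]

lemma compl_cycInt {n : ℕ} {k l : ZMod (n + 3)} (h : k ≠ l) :
    (cycInt n k l)ᶜ = cycInt n l k := by
  ext v
  rw [mem_compl, mem_cycInt, mem_cycInt]
  have h1 := val_sub_base k v l
  have h2 := val_sub_base k k l
  have h3 : (l - k).val ≠ 0 := by rwa [Ne, ZMod.val_eq_zero, sub_eq_zero, eq_comm]
  have := ZMod.val_lt (v - k)
  have := ZMod.val_lt (l - k)
  rw [sub_self, ZMod.val_zero] at h2
  split_ifs at h1 h2 <;> omega

/-- The total weight of the segments from `X` to `Y`, with multiplicity if the two sets meet. -/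
def blockWeight {n : ℕ} (G : Lam n) (X Y : Finset (ZMod (n + 3))) : ℝ :=
  ∑ a ∈ X, ∑ b ∈ Y, G.w a b

lemma blockWeight_comm {n : ℕ} (G : Lam n) (X Y : Finset (ZMod (n + 3))) :
    blockWeight G X Y = blockWeight G Y X := by
  unfold blockWeight
  rw [sum_comm]
  simp_rw [G.symm]

lemma blockWeight_union_left {n : ℕ} (G : Lam n) {X X' : Finset (ZMod (n + 3))}
    (Y : Finset (ZMod (n + 3))) (h : Disjoint X X') :
    blockWeight G (X ∪ X') Y = blockWeight G X Y + blockWeight G X' Y :=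
  sum_union h

lemma blockWeight_union_right {n : ℕ} (G : Lam n) (Y : Finset (ZMod (n + 3)))
    {X X' : Finset (ZMod (n + 3))} (h : Disjoint X X') :
    blockWeight G Y (X ∪ X') = blockWeight G Y X + blockWeight G Y X' := by
  rw [blockWeight_comm, blockWeight_union_left G Y h, blockWeight_comm G X, blockWeight_comm G X']

lemma Icyc_symm {n : ℕ} (G : Lam n) (k l : ZMod (n + 3)) :
    Icyc n G.w k l = Icyc n G.w l k := by
  rcases eq_or_ne k l with rfl | h
  · rfl
  · change blockWeight G _ _ = blockWeight G _ _
    rw [compl_cycInt h, compl_cycInt h.symm, blockWeight_comm]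

lemma Icyc_self {n : ℕ} (G : Lam n) (k : ZMod (n + 3)) : Icyc n G.w k k = 0 := by
  have : cycInt n k k = ∅ := by
    ext v
    rw [mem_cycInt, sub_self, ZMod.val_zero]
    simp only [notMem_empty, iff_false]
    omega
  simp [Icyc, this]

/-- The interval `(k, k + 1]` is the single vertex `k + 1`, so `I_{k,k+1}` is a row sum. -/
lemma Icyc_succ {n : ℕ} (G : Lam n) (k : ZMod (n + 3)) : Icyc n G.w k (k + 1) = 0 := by
  have h1 : (1 : ZMod (n + 3)).val = 1 := ZMod.val_one_eq_one_mod _ |>.trans (by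
    rw [Nat.mod_eq_of_lt]; omega)
  have : cycInt n k (k + 1) = {k + 1} := by
    ext v
    rw [mem_cycInt, add_sub_cancel_left, h1, mem_singleton, ← sub_eq_iff_eq_add',
      ← (ZMod.val_injective (n + 3)).eq_iff, h1]
    omega
  have h2 := sum_add_sum_compl {k + 1} (G.w (k + 1))
  rw [sum_singleton, G.diag_zero, zero_add, G.balanced] at h2
  rw [Icyc, this, sum_singleton, h2]

/-- For clockwise `p, q, r, s`, segments from `(p, q]` to `(r, s]` are diagonals. -/
lemma isDiag_of_mem {n : ℕ} {p q r s a c : ZMod (n + 3)} (h : Clockwise n p q r s)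
    (ha : a ∈ cycInt n p q) (hc : c ∈ cycInt n r s) : IsDiag n a c := by
  obtain ⟨h1, h2, h3⟩ := h
  rw [mem_cycInt] at ha hc
  rw [isDiag_iff]
  have e1 := val_sub_base p c r
  have e2 := val_sub_base p s r
  have e3 := val_sub_base p a c
  have e4 := val_sub_base p c a
  have := ZMod.val_lt (a - p)
  have := ZMod.val_lt (c - p)
  have := ZMod.val_lt (s - p)
  split_ifs at e1 e2 e3 e4 <;> omega

lemma Clockwise.rotate {n : ℕ} {p q r s : ZMod (n + 3)} (h : Clockwise n p q r s) :
    Clockwise n q r s p := by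
  obtain ⟨h1, h2, h3⟩ := h
  have e1 := val_sub_base p r q
  have e2 := val_sub_base p s q
  have e3 := val_sub_base p p q
  have := ZMod.val_lt (s - p)
  rw [sub_self, ZMod.val_zero] at e3
  unfold Clockwise
  split_ifs at e1 e2 e3 <;> omega

lemma clockwise_of_mem {n : ℕ} {p q r s a b c d : ZMod (n + 3)} (h : Clockwise n p q r s)
    (ha : a ∈ cycInt n p q) (hb : b ∈ cycInt n q r) (hc : c ∈ cycInt n r s)
    (hd : d ∈ cycInt n s p) : Clockwise n a b c d := by
  obtain ⟨h1, h2, h3⟩ := h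
  rw [mem_cycInt] at ha hb hc hd
  unfold Clockwise
  have := ZMod.val_lt (a - p)
  have := ZMod.val_lt (b - p)
  have := ZMod.val_lt (c - p)
  have := ZMod.val_lt (d - p)
  have := ZMod.val_lt (s - p)
  have p0 : (p - p).val = 0 := by rw [sub_self, ZMod.val_zero]
  -- The distances from `p` satisfy `a ≤ q < b ≤ r < c ≤ s`, and `s < d` unless `d = p`.
  have hb' : (q - p).val < (b - p).val ∧ (b - p).val ≤ (r - p).val := by
    have e1 := val_sub_base p b q
    have e2 := val_sub_base p r q
    split_ifs at e1 e2 <;> omega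
  have hc' : (r - p).val < (c - p).val ∧ (c - p).val ≤ (s - p).val := by
    have e1 := val_sub_base p c r
    have e2 := val_sub_base p s r
    split_ifs at e1 e2 <;> omega
  have hd' : (s - p).val < (d - p).val ∨ (d - p).val = 0 := by
    have e1 := val_sub_base p d s
    have e2 := val_sub_base p p s
    split_ifs at e1 e2 <;> omega
  have e1 := val_sub_base p b a
  have e2 := val_sub_base p c a
  have e3 := val_sub_base p d a
  split_ifs at e1 e2 e3 <;> omega

lemma blockWeight_nonneg {n : ℕ} (G : Lam n) {p q r s : ZMod (n + 3)}
    (h : Clockwise n p q r s) : 0 ≤ blockWeight G (cycInt n p q) (cycInt n r s) :=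
  sum_nonneg fun _ ha => sum_nonneg fun _ hc => G.nonneg _ _ (isDiag_of_mem h ha hc)

/-- Segments joining one pair of opposite blocks cross those joining the other pair, so at most
one of the two pairs carries weight. -/
lemma blockWeight_eq_zero_or {n : ℕ} (G : Lam n) {p q r s : ZMod (n + 3)}
    (h : Clockwise n p q r s) :
    blockWeight G (cycInt n p q) (cycInt n r s) = 0 ∨
      blockWeight G (cycInt n q r) (cycInt n s p) = 0 := by
  by_cases hz : ∀ a ∈ cycInt n p q, ∀ c ∈ cycInt n r s, G.w a c = 0
  · exact Or.inl (sum_eq_zero fun a ha => sum_eq_zero fun c hc => hz a ha c hc)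
  · push Not at hz
    obtain ⟨a, ha, c, hc, hac⟩ := hz
    refine Or.inr (sum_eq_zero fun b hb => sum_eq_zero fun d hd => ?_)
    exact (G.noncross a c b d (isDiag_of_mem h ha hc) (isDiag_of_mem h.rotate hb hd)
      (Or.inl (clockwise_of_mem h ha hb hc hd))).resolve_left hac

lemma cycInt_union {n : ℕ} {p q r : ZMod (n + 3)} (h : (q - p).val ≤ (r - p).val) :
    cycInt n p q ∪ cycInt n q r = cycInt n p r := by
  ext v
  rw [mem_union, mem_cycInt, mem_cycInt, mem_cycInt]
  have e1 := val_sub_base p v q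
  have e2 := val_sub_base p r q
  have := ZMod.val_lt (v - p)
  have := ZMod.val_lt (r - p)
  split_ifs at e1 e2 <;> omega

lemma cycInt_disjoint {n : ℕ} {p q r : ZMod (n + 3)} (h : (q - p).val ≤ (r - p).val) :
    Disjoint (cycInt n p q) (cycInt n q r) := by
  rw [disjoint_left]
  intro v
  rw [mem_cycInt, mem_cycInt]
  have e1 := val_sub_base p v q
  have e2 := val_sub_base p r q
  have := ZMod.val_lt (v - p)
  have := ZMod.val_lt (r - p)
  split_ifs at e1 e2 <;> omega

lemma Clockwise.ne_pq {n : ℕ} {p q r s : ZMod (n + 3)} (h : Clockwise n p q r s) : p ≠ q := by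
  rintro rfl
  have := h.1
  rw [sub_self, ZMod.val_zero] at this
  omega

lemma Clockwise.ne_pr {n : ℕ} {p q r s : ZMod (n + 3)} (h : Clockwise n p q r s) : p ≠ r := by
  rintro rfl
  have := h.2.1
  rw [sub_self, ZMod.val_zero] at this
  omega

/-- `I_pr = AC + AD + BC + BD`. -/
lemma Icyc_opposite {n : ℕ} (G : Lam n) {p q r s : ZMod (n + 3)} (h : Clockwise n p q r s) :
    Icyc n G.w p r =
      blockWeight G (cycInt n p q) (cycInt n r s) + blockWeight G (cycInt n p q) (cycInt n s p) +
      (blockWeight G (cycInt n q r) (cycInt n r s) +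
        blockWeight G (cycInt n q r) (cycInt n s p)) := by
  have h2 := h.rotate.rotate
  change blockWeight G _ _ = _
  rw [compl_cycInt h.ne_pr, ← cycInt_union h.2.1.le, ← cycInt_union h2.2.1.le,
    blockWeight_union_left G _ (cycInt_disjoint h.2.1.le),
    blockWeight_union_right G _ (cycInt_disjoint h2.2.1.le),
    blockWeight_union_right G _ (cycInt_disjoint h2.2.1.le)]

/-- `I_pq = AB + AC + AD`. -/
lemma Icyc_side {n : ℕ} (G : Lam n) {p q r s : ZMod (n + 3)} (h : Clockwise n p q r s) :
    Icyc n G.w p q =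
      blockWeight G (cycInt n p q) (cycInt n q r) + blockWeight G (cycInt n p q) (cycInt n r s) +
      blockWeight G (cycInt n p q) (cycInt n s p) := by
  have h1 := h.rotate
  have h2 := h1.rotate
  have hq : (r - q).val ≤ (p - q).val := (h1.2.1.trans h1.2.2).le
  change blockWeight G _ _ = _
  -- The complement `(q, p]` of `A` splits at `r` into `B` and `C ∪ D`.
  rw [compl_cycInt h.ne_pq, ← cycInt_union hq,
    blockWeight_union_right G _ (cycInt_disjoint hq), ← cycInt_union h2.2.1.le,
    blockWeight_union_right G _ (cycInt_disjoint h2.2.1.le), add_assoc]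

lemma Icyc_pluecker {n : ℕ} (G : Lam n) {p q r s : ZMod (n + 3)} (h : Clockwise n p q r s) :
    Icyc n G.w p r + Icyc n G.w q s =
      max (Icyc n G.w p q + Icyc n G.w r s) (Icyc n G.w q r + Icyc n G.w p s) := by
  have h1 := h.rotate
  have h2 := h1.rotate
  have h3 := h2.rotate
  rw [Icyc_symm G p s, Icyc_opposite G h, Icyc_opposite G h1, Icyc_side G h, Icyc_side G h1,
    Icyc_side G h2, Icyc_side G h3]
  have n1 := blockWeight_nonneg G h
  have n2 := blockWeight_nonneg G h1
  have z := blockWeight_eq_zero_or G h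
  have c := blockWeight_comm G
  rw [c (cycInt n q r) (cycInt n p q), c (cycInt n r s) (cycInt n p q),
    c (cycInt n s p) (cycInt n p q), c (cycInt n r s) (cycInt n q r),
    c (cycInt n s p) (cycInt n q r), c (cycInt n s p) (cycInt n r s)]
  rcases z with z | z
  · rw [max_eq_right] <;> linarith
  · rw [max_eq_left] <;> linarith

/-- For an `A`-lamination `G` over `ℝ`, the numbers `a_{kl} = (1/2)·I_{kl}(G)` vanish on
edges (and on the diagonal, and are symmetric) and satisfy the tropical Plücker
relations: `a` is an `ℝ`-tropical point of the cluster `A`-variety of type `Aₙ`,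
i.e. an element of `L(ℝ)`. -/
theorem lamination_halfI_is_tropical_point
    (n : ℕ) (hn : 1 ≤ n) (G : Lam n) :
    ∃ X : TropPt n, ∀ k l, X.x k l = (1 / 2) * Icyc n G.w k l := by
  refine ⟨⟨fun k l => (1 / 2) * Icyc n G.w k l, ?_, ?_, ?_, ?_⟩, fun _ _ => rfl⟩
  · intro i j
    rw [Icyc_symm]
  · intro i
    rw [Icyc_self, mul_zero]
  · rintro i j (rfl | rfl)
    · rw [Icyc_symm, Icyc_succ, mul_zero]
    · rw [Icyc_succ, mul_zero]
  · intro p q r s h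
    simp only [← mul_add]
    rw [Icyc_pluecker G h, mul_max_of_nonneg _ _ (by norm_num)]
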